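/- arXiv:2305.09386 — 2 statements merged into one kernel-verified Lean document; each statement's English description precedes it below -/
import Mathlib

section
/- Let Λ : L∞(F) × L∞(F) → L∞(G) satisfy: no-undercut (Λ(X,Y) ≤ Λ(X,X) a.s. for all X,Y); monotonicity (X ≥ Y a.s. implies Λ(X,Z) ≤ Λ(Y,Z) a.s. for all Z); weak-convexity (Λ(Σᵢ aᵢXᵢ, X) ≤ Σᵢ aᵢΛ(Xᵢ, X) a.s. whenever aᵢ ∈ [0,1], Σᵢ aᵢ = 1 and Σᵢ aᵢXᵢ = X); normalization (Λ(0,X) = 0 a.s. for all X); and cash-subadditivity (Λ(X+m, Y+m) ≥ Λ(X,Y) − m a.s. for all m ∈ L∞₊(G) and all X,Y). Then the map ρ : L∞(F) → L∞(G) defined by ρ(X) := Λ(X,X) is monotone (X ≥ Y a.s. implies ρ(X) ≤ ρ(Y) a.s.), convex (ρ(αX + (1−α)Y) ≤ αρ(X) + (1−α)ρ(Y) a.s. for all α ∈ [0,1]), normalized (ρ(0) = 0), and cash-subadditive (ρ(X+m) ≥ ρ(X) − m a.s. for all m ∈ L∞₊(G)). -/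
/-!
Both nontrivial properties of `ρ(X) = Λ(X, X)` come from no-undercut, which replaces the second
argument of `Λ` by the first. For monotonicity, `Λ(X, X) ≤ Λ(Y, X) ≤ Λ(Y, Y)` when `Y ≤ X`. For
convexity, weak-convexity with the two positions `X`, `Y` and aggregate `Z = αX + (1 - α)Y` gives
`ρ(Z) ≤ αΛ(X, Z) + (1 - α)Λ(Y, Z)`, and no-undercut bounds the right-hand side. Normalization and
cash-subadditivity are the diagonal cases of the corresponding hypotheses.
-/

open MeasureTheory Filter

/-- `X` is a bounded `m`-measurable real random variable, i.e. an element of `L∞(m)`. -/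
def MemLinf {Ω : Type*} (m : MeasurableSpace Ω) (X : Ω → ℝ) : Prop :=
  Measurable[m] X ∧ ∃ C : ℝ, ∀ ω, |X ω| ≤ C

/-- if a capital allocation rule `Λ` satisfies no-undercut, monotonicity,
weak-convexity, normalization and cash-subadditivity, then `ρ(X) := Λ(X,X)` is monotone,
convex, normalized and cash-subadditive. -/
theorem statement0
    {Ω : Type*} [F : MeasurableSpace Ω] (G : MeasurableSpace Ω) (hG : G ≤ F)
    (μ : Measure Ω) [IsProbabilityMeasure μ]
    (Λ : (Ω → ℝ) → (Ω → ℝ) → Ω → ℝ)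
    (hΛmem : ∀ X Y, MemLinf F X → MemLinf F Y → MemLinf G (Λ X Y))
    (hNoUndercut : ∀ X Y, MemLinf F X → MemLinf F Y → Λ X Y ≤ᵐ[μ] Λ X X)
    (hMono : ∀ X Y Z, MemLinf F X → MemLinf F Y → MemLinf F Z →
      Y ≤ᵐ[μ] X → Λ X Z ≤ᵐ[μ] Λ Y Z)
    (hWeakConv : ∀ (n : ℕ) (a : Fin n → ℝ) (Xi : Fin n → Ω → ℝ) (X : Ω → ℝ),
      (∀ i, MemLinf F (Xi i)) → MemLinf F X →
      (∀ i, a i ∈ Set.Icc (0 : ℝ) 1) → (∑ i, a i) = 1 →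
      (∀ ω, ∑ i, a i * Xi i ω = X ω) →
      Λ (fun ω => ∑ i, a i * Xi i ω) X ≤ᵐ[μ] fun ω => ∑ i, a i * Λ (Xi i) X ω)
    (hNorm : ∀ X, MemLinf F X → Λ (fun _ => 0) X =ᵐ[μ] fun _ => 0)
    (hCashSub : ∀ (m : Ω → ℝ), MemLinf G m → 0 ≤ᵐ[μ] m →
      ∀ X Y, MemLinf F X → MemLinf F Y →
      (fun ω => Λ X Y ω - m ω) ≤ᵐ[μ] Λ (fun ω => X ω + m ω) (fun ω => Y ω + m ω)) :
    -- monotonicity of ρ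
    (∀ X Y, MemLinf F X → MemLinf F Y → Y ≤ᵐ[μ] X → Λ X X ≤ᵐ[μ] Λ Y Y) ∧
    -- convexity of ρ
    (∀ X Y, MemLinf F X → MemLinf F Y → ∀ α : ℝ, α ∈ Set.Icc (0 : ℝ) 1 →
      Λ (fun ω => α * X ω + (1 - α) * Y ω) (fun ω => α * X ω + (1 - α) * Y ω)
        ≤ᵐ[μ] fun ω => α * Λ X X ω + (1 - α) * Λ Y Y ω) ∧
    -- normalization of ρ
    (Λ (fun _ => 0) (fun _ => 0) =ᵐ[μ] fun _ => 0) ∧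
    -- cash-subadditivity of ρ
    (∀ (m : Ω → ℝ), MemLinf G m → 0 ≤ᵐ[μ] m → ∀ X, MemLinf F X →
      (fun ω => Λ X X ω - m ω) ≤ᵐ[μ] Λ (fun ω => X ω + m ω) (fun ω => X ω + m ω)) := by
  refine ⟨fun X Y hX hY h => ?_, fun X Y hX hY α hα => ?_, ?_, fun m hm h0 X hX => ?_⟩
  · exact (hMono X Y X hX hY hX h).trans (hNoUndercut Y X hY hX)
  · have hZ : MemLinf F (fun ω => α * X ω + (1 - α) * Y ω) := by
      obtain ⟨hXm, C, hC⟩ := hX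
      obtain ⟨hYm, D, hD⟩ := hY
      refine ⟨(hXm.const_mul α).add (hYm.const_mul (1 - α)), |α| * C + |1 - α| * D, fun ω => ?_⟩
      refine (abs_add_le _ _).trans ?_
      rw [abs_mul, abs_mul]
      exact add_le_add (mul_le_mul_of_nonneg_left (hC ω) (abs_nonneg _))
        (mul_le_mul_of_nonneg_left (hD ω) (abs_nonneg _))
    have hα' : 1 - α ∈ Set.Icc (0 : ℝ) 1 := ⟨sub_nonneg.2 hα.2, sub_le_self _ hα.1⟩
    have key := hWeakConv 2 ![α, 1 - α] ![X, Y] (fun ω => α * X ω + (1 - α) * Y ω)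
      (Fin.forall_fin_two.2 ⟨hX, hY⟩) hZ (Fin.forall_fin_two.2 ⟨hα, hα'⟩)
      (by simp) (fun ω => by simp)
    simp only [Fin.sum_univ_two, Matrix.cons_val_zero, Matrix.cons_val_one] at key
    filter_upwards [key, hNoUndercut X _ hX hZ, hNoUndercut Y _ hY hZ] with ω h1 h2 h3
    exact h1.trans (add_le_add (mul_le_mul_of_nonneg_left h2 hα.1)
      (mul_le_mul_of_nonneg_left h3 hα'.1))
  · exact hNorm _ ⟨measurable_const, 0, fun ω => by simp⟩
  · exact hCashSub m hm h0 X X hX hX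
end

section
/- Let ρ : L∞(F) → L∞(G) be monotone (X ≥ Y a.s. implies ρ(X) ≤ ρ(Y) a.s.) and cash-subadditive (ρ(X+m) ≥ ρ(X) − m a.s. for all m ∈ L∞₊(G) and all X ∈ L∞(F)). Then ρ is regular: for every A ∈ G and all X, Y ∈ L∞(F), ρ(X·1_A + Y·1_{Aᶜ}) = ρ(X)·1_A + ρ(Y)·1_{Aᶜ} P-almost surely. -/
/-!
The heart of the matter is locality: if `X = Z` on `A ∈ G`, then `ρ X ≤ ρ Z` a.s. on `A`
(`rho_le_on_of_eqOn`). Choose a constant `C` with `Z - X ≤ C` and put `m = C·1_{Aᶜ} ∈ L∞₊(G)`.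
Then `Z ≤ X + m`, so monotonicity and cash-subadditivity give `ρ X - m ≤ ρ (X + m) ≤ ρ Z`, and
`m` vanishes on `A`. By symmetry `ρ X = ρ Z` a.s. on `A`. Regularity follows on comparing
`X·1_A + Y·1_{Aᶜ}` with `X` on `A` and with `Y` on `Aᶜ`.
-/

open MeasureTheory Filter

/-- One half of locality: `ρ X ≤ ρ Z` a.s. on any `A ∈ G` on which `X` and `Z` agree. -/
theorem rho_le_on_of_eqOn
    {Ω : Type*} [F : MeasurableSpace Ω] (G : MeasurableSpace Ω)
    (μ : Measure Ω) (hG : G ≤ F)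
    (ρ : (Ω → ℝ) → Ω → ℝ)
    (hMono : ∀ X Y, MemLinf F X → MemLinf F Y → Y ≤ᵐ[μ] X → ρ X ≤ᵐ[μ] ρ Y)
    (hCashSub : ∀ (m : Ω → ℝ), MemLinf G m → 0 ≤ᵐ[μ] m → ∀ X, MemLinf F X →
      (fun ω => ρ X ω - m ω) ≤ᵐ[μ] ρ (fun ω => X ω + m ω))
    {A : Set Ω} (hA : MeasurableSet[G] A) {X Z : Ω → ℝ} (hX : MemLinf F X) (hZ : MemLinf F Z)
    (hXZ : ∀ ω ∈ A, X ω = Z ω) :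
    ∀ᵐ ω ∂μ, ω ∈ A → ρ X ω ≤ ρ Z ω := by
  obtain ⟨hXm, C₁, hC₁⟩ := hX
  obtain ⟨hZm, C₂, hC₂⟩ := hZ
  -- The absolute value makes `m` nonnegative with no case split on `Ω` being empty.
  let m : Ω → ℝ := Aᶜ.indicator fun _ => |C₁ + C₂|
  have hm_nonneg : ∀ ω, 0 ≤ m ω := fun ω => Set.indicator_nonneg (fun _ _ => abs_nonneg _) ω
  have hm_le : ∀ ω, m ω ≤ |C₁ + C₂| := fun ω =>
    Set.indicator_le_self' (fun _ _ => abs_nonneg (C₁ + C₂)) ω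
  have hm_meas : Measurable[G] m :=
    Measurable.indicator (@measurable_const _ _ _ G _) hA.compl
  have hm : MemLinf G m :=
    ⟨hm_meas, |C₁ + C₂|, fun ω => by rw [abs_of_nonneg (hm_nonneg ω)]; exact hm_le ω⟩
  have hXm' : MemLinf F (fun ω => X ω + m ω) :=
    ⟨hXm.add (hm_meas.mono hG le_rfl), C₁ + |C₁ + C₂|, fun ω => by
      have h₁ := abs_add_le (X ω) (m ω)
      rw [abs_of_nonneg (hm_nonneg ω)] at h₁
      linarith [hC₁ ω, hm_le ω]⟩
  have hle : ∀ ω, Z ω ≤ X ω + m ω := fun ω => by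
    by_cases hω : ω ∈ A
    · linarith [hXZ ω hω, hm_nonneg ω]
    · have hmω : m ω = |C₁ + C₂| := Set.indicator_of_mem (s := Aᶜ) hω _
      linarith [le_abs_self (C₁ + C₂), (abs_le.1 (hC₁ ω)).1, (abs_le.1 (hC₂ ω)).2]
  filter_upwards [hCashSub m hm (Eventually.of_forall hm_nonneg) X ⟨hXm, C₁, hC₁⟩,
    hMono _ Z hXm' ⟨hZm, C₂, hC₂⟩ (Eventually.of_forall hle)] with ω h₁ h₂ hω
  have hmω : m ω = 0 := Set.indicator_of_notMem (s := Aᶜ) (fun h => h hω) _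
  linarith

/-- a monotone and cash-subadditive risk measure `ρ : L∞(F) → L∞(G)` is
regular: `ρ(X·1_A + Y·1_{Aᶜ}) = ρ(X)·1_A + ρ(Y)·1_{Aᶜ}` a.s. for every `A ∈ G`. -/
theorem statement8
    {Ω : Type*} [F : MeasurableSpace Ω] (G : MeasurableSpace Ω) (hG : G ≤ F)
    (μ : Measure Ω) [IsProbabilityMeasure μ]
    (ρ : (Ω → ℝ) → Ω → ℝ)
    (hρmem : ∀ X, MemLinf F X → MemLinf G (ρ X))
    (hMono : ∀ X Y, MemLinf F X → MemLinf F Y → Y ≤ᵐ[μ] X → ρ X ≤ᵐ[μ] ρ Y)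
    (hCashSub : ∀ (m : Ω → ℝ), MemLinf G m → 0 ≤ᵐ[μ] m → ∀ X, MemLinf F X →
      (fun ω => ρ X ω - m ω) ≤ᵐ[μ] ρ (fun ω => X ω + m ω)) :
    ∀ (A : Set Ω), MeasurableSet[G] A → ∀ X Y, MemLinf F X → MemLinf F Y →
      ρ (fun ω => A.indicator X ω + Aᶜ.indicator Y ω) =ᵐ[μ]
        fun ω => A.indicator (ρ X) ω + Aᶜ.indicator (ρ Y) ω := by
  intro A hA X Y hX hY
  have hW : MemLinf F (fun ω => A.indicator X ω + Aᶜ.indicator Y ω) := by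
    obtain ⟨hXm, C₁, hC₁⟩ := hX
    obtain ⟨hYm, C₂, hC₂⟩ := hY
    refine ⟨(hXm.indicator (hG _ hA)).add (hYm.indicator (hG _ hA).compl), max C₁ C₂, fun ω => ?_⟩
    by_cases hω : ω ∈ A
    · simpa [hω] using Or.inl (hC₁ ω)
    · simpa [hω] using Or.inr (hC₂ ω)
  have hWX : ∀ ω ∈ A, A.indicator X ω + Aᶜ.indicator Y ω = X ω := fun ω hω => by simp [hω]
  have hWY : ∀ ω ∈ Aᶜ, A.indicator X ω + Aᶜ.indicator Y ω = Y ω := fun ω hω => by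
    have hω' : ω ∉ A := hω
    simp [hω']
  have key := @rho_le_on_of_eqOn Ω F G μ hG ρ hMono hCashSub
  filter_upwards [key hA hW hX hWX, key hA hX hW fun ω hω => (hWX ω hω).symm,
    key hA.compl hW hY hWY, key hA.compl hY hW fun ω hω => (hWY ω hω).symm] with ω h₁ h₂ h₃ h₄
  by_cases hω : ω ∈ A
  · simpa [hω] using le_antisymm (h₁ hω) (h₂ hω)
  · simpa [hω] using le_antisymm (h₃ hω) (h₄ hω)
end
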